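/- Suppose m is odd. Then w̃_{m+1} lies in the right coset W_{P_1}·w_{m+1}, its defining word is reduced, so ℓ(w̃_{m+1}) = m(m−1)/2, and w̃_{m+1} is the minimal-length representative of this coset: ℓ(w̃_{m+1}) ≤ ℓ(u) for every u ∈ W_{P_1}·w_{m+1}. -/

import Mathlib

/-!
Write `t_j` for the `j`-th block of `w_{m+1}` and `b_j` for the `j`-th block of `w̃_{m+1}`. If `c_j`
is the fork generator ending `b_j` and `c_{j+1}` the other one, then
`t_j = b_j c_{j+1} s_3 ⋯ s_{j+1}`. Hence the first `j` blocks of the two words define the same right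
coset of `W_{P_1}` as soon as the coset of `b_1 ⋯ b_j` is fixed under right multiplication by
`c_{j+1}, s_3, …, s_{j+1}`. This is `DRel.tildeProd_fix`, proved by induction on `j` from the braid
relations alone: conjugation by `b_j` carries `s_4, …, s_{j+1}` to `s_3, …, s_j` and `s_3` to `c_j`,
while for `j ≥ 2` the generator `c_{j+1}` moves through the last two blocks and comes out on the
left as `s_{j+1} ∈ W_{P_1}`. The coset statement is `DRel.tildeProd_lastProd`.

For the lengths, the group acts on patterns of signs (the weights of a half-spin representation),
and `W_{P_1}` fixes the all-plus pattern. The sum of the 0-based positions of the minus signs grows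
by at most one under a simple reflection, so it bounds the length from below (`height_le_length`).
The image of the all-plus pattern under `u⁻¹` depends only on the coset `W_{P_1} u`, and for the
coset of `w̃_{m+1}` this sum is `1 + ⋯ + (m - 1) = m (m - 1) / 2` (`height_tildeProd`). This is also
the number of letters of the defining word, so the word is reduced and `w̃_{m+1}` is minimal in its
coset.
-/

namespace FMK3

/-- Entry of the Coxeter matrix of type `D_{m+1}`, with 1-based indices:
nodes `1` and `2` are the two fork ends, both attached to node `3` of the
chain `3 - 4 - ... - (m+1)`. -/
def dEntry (a b : ℕ) : ℕ :=
  if a = b then 1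
  else if (min a b = 1 ∧ max a b = 3) ∨ (min a b = 2 ∧ max a b = 3)
      ∨ (3 ≤ min a b ∧ max a b = min a b + 1) then 3
  else 2

theorem dEntry_symm (a b : ℕ) : dEntry a b = dEntry b a := by
  unfold dEntry
  rw [Nat.min_comm b a, Nat.max_comm b a]
  by_cases h : a = b
  · subst h; rfl
  · have h' : ¬b = a := fun hh => h hh.symm
    rw [if_neg h, if_neg h']

/-- The Coxeter matrix of type `D_{m+1}` on `Fin (m+1)` (index `i` corresponds to the
simple reflection `s_{i+1}` in the 1-based numbering). -/
def dMatrix (m : ℕ) : CoxeterMatrix (Fin (m + 1)) where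
  M := Matrix.of fun i j => dEntry (i.val + 1) (j.val + 1)
  isSymm := Matrix.IsSymm.ext fun i j => dEntry_symm (j.val + 1) (i.val + 1)
  diagonal := fun i => by simp [dEntry]
  off_diagonal := fun i j h => by
    have hab : i.val + 1 ≠ j.val + 1 := fun hh => h (Fin.ext (Nat.succ_injective hh))
    simp only [Matrix.of_apply]
    unfold dEntry
    rw [if_neg hab]
    split <;> omega

/-- The Coxeter group of type `D_{m+1}`. -/
abbrev DGroup (m : ℕ) := (dMatrix m).Group

/-- The canonical Coxeter system of type `D_{m+1}`. -/
def dcs (m : ℕ) : CoxeterSystem (dMatrix m) (DGroup m) := (dMatrix m).toCoxeterSystem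

/-- Conversion from the 1-based index `k` (of the simple reflection `s_k`) to `Fin (m+1)`. -/
def toIdx (m k : ℕ) : Fin (m + 1) := ⟨(k - 1) % (m + 1), Nat.mod_lt _ m.succ_pos⟩

/-- The descending word `[a, a-1, ..., b]` (1-based letters). -/
def desc (a b : ℕ) : List ℕ := (List.range (a + 1 - b)).map (fun t => a - t)

/-- The ascending word `[a, a+1, ..., b]` (1-based letters). -/
def asc (a b : ℕ) : List ℕ := (List.range (b + 1 - a)).map (fun t => a + t)

/-- The word `(s_2)(s_3 s_2)(s_4 s_3 s_2) ⋯ (s_{m+1} ⋯ s_4 s_3 s_2)` defining `w_1`. -/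
def w1Word (m : ℕ) : List ℕ := (List.range m).flatMap (fun j => desc (j + 2) 2)

/-- The word `(s_1 s_2)(s_3 s_1 s_2 s_3) ⋯ (s_m ⋯ s_3 s_1 s_2 s_3 ⋯ s_m)`
defining `w_{m+1}`. -/
def wLastWord (m : ℕ) : List ℕ :=
  (List.range (m - 1)).flatMap (fun j => desc (j + 2) 3 ++ [1, 2] ++ asc 3 (j + 2))

/-- The word `(s_1)(s_3 s_2)(s_4 s_3 s_1) ⋯ (s_{j+1} ⋯ s_4 s_3 c_j) ⋯` defining `w̃_{m+1}`,
where `c_j = s_1` for odd `j` and `c_j = s_2` for even `j`, `j = 1, ..., m-1`. -/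
def wTildeWord (m : ℕ) : List ℕ :=
  (List.range (m - 1)).flatMap
    (fun j => desc (j + 2) 3 ++ [if (j + 1) % 2 = 1 then 1 else 2])

/-- The element of the Coxeter group of type `D_{m+1}` given by a word in the 1-based
letters `s_1, ..., s_{m+1}`. -/
def wp (m : ℕ) (w : List ℕ) : DGroup m := (dcs m).wordProd (w.map (toIdx m))

/-- The standard parabolic subgroup `W_{P_i}` generated by all simple reflections
except `s_i` (1-based `i`). -/
def WP (m i : ℕ) : Subgroup (DGroup m) :=
  Subgroup.closure ((dcs m).simple '' {j | j ≠ toIdx m i})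


/-! ### Words over generators satisfying the relations of type `D` -/

section Words

variable {G : Type*} (s : ℕ → G)

/-- The fork generator `c_j`: `s_1` for odd `j` and `s_2` for even `j`. -/
def forkGen (j : ℕ) : G := if j % 2 = 1 then s 1 else s 2

variable {s} in
lemma forkGen_add_two (j : ℕ) : forkGen s (j + 2) = forkGen s j := by
  simp [forkGen]

variable {s} in
lemma forkGen_cases (j : ℕ) :
    (forkGen s j = s 1 ∧ forkGen s (j + 1) = s 2) ∨
      (forkGen s j = s 2 ∧ forkGen s (j + 1) = s 1) := by
  unfold forkGen
  rcases Nat.mod_two_eq_zero_or_one j with h | h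
  · right; simp [h, Nat.add_mod]
  · left; simp [h, Nat.add_mod]

variable [Group G]

/-- The descending product `s_{a+2} ⋯ s_4 s_3`, which is `1` for `a = 0`. -/
def descProd : ℕ → G
  | 0 => 1
  | a + 1 => s (a + 3) * descProd a

/-- The product of the first `j` blocks of `w̃`. -/
def tildeProd : ℕ → G
  | 0 => 1
  | j + 1 => tildeProd j * descProd s j * forkGen s (j + 1)

/-- The product of the first `j` blocks of `w_{m+1}`; each block is a conjugate of `s_1 s_2`. -/
def lastProd : ℕ → G
  | 0 => 1
  | j + 1 => lastProd j * (descProd s j * (s 1 * s 2) * (descProd s j)⁻¹)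

/-- The relations of type `D` among `s_1, …, s_N`, in the 1-based numbering. -/
structure DRel (N : ℕ) : Prop where
  sq : ∀ i, s i * s i = 1
  comm12 : s 1 * s 2 = s 2 * s 1
  comm1 : ∀ k, 4 ≤ k → k ≤ N → s k * s 1 = s 1 * s k
  comm2 : ∀ k, 4 ≤ k → k ≤ N → s k * s 2 = s 2 * s k
  comm : ∀ i k, 3 ≤ i → i + 2 ≤ k → k ≤ N → s k * s i = s i * s k
  braid1 : 3 ≤ N → s 3 * s 1 * s 3 = s 1 * s 3 * s 1
  braid2 : 3 ≤ N → s 3 * s 2 * s 3 = s 2 * s 3 * s 2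
  braid : ∀ i, 3 ≤ i → i + 1 ≤ N → s i * s (i + 1) * s i = s (i + 1) * s i * s (i + 1)

variable {s} {N : ℕ}

namespace DRel

lemma forkGen_sq (h : DRel s N) (j : ℕ) : forkGen s j * forkGen s j = 1 := by
  rcases forkGen_cases (s := s) j with ⟨e, -⟩ | ⟨e, -⟩ <;> rw [e] <;> exact h.sq _

lemma forkGen_comm (h : DRel s N) (j : ℕ) :
    forkGen s j * forkGen s (j + 1) = forkGen s (j + 1) * forkGen s j := by
  rcases forkGen_cases (s := s) j with ⟨e, e'⟩ | ⟨e, e'⟩ <;> rw [e, e']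
  · exact h.comm12
  · exact h.comm12.symm

lemma forkGen_mul (h : DRel s N) (j : ℕ) :
    forkGen s j * forkGen s (j + 1) = s 1 * s 2 := by
  rcases forkGen_cases (s := s) j with ⟨e, e'⟩ | ⟨e, e'⟩ <;> rw [e, e']
  exact h.comm12.symm

lemma simple_forkGen (h : DRel s N) (j k : ℕ) (hk : 4 ≤ k) (hN : k ≤ N) :
    s k * forkGen s j = forkGen s j * s k := by
  rcases forkGen_cases (s := s) j with ⟨e, -⟩ | ⟨e, -⟩ <;> rw [e]
  · exact h.comm1 k hk hN
  · exact h.comm2 k hk hN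

lemma braid_forkGen (h : DRel s N) (j : ℕ) (hN : 3 ≤ N) :
    s 3 * forkGen s j * s 3 = forkGen s j * s 3 * forkGen s j := by
  rcases forkGen_cases (s := s) j with ⟨e, -⟩ | ⟨e, -⟩ <;> rw [e]
  · exact h.braid1 hN
  · exact h.braid2 hN

lemma simple_descProd (h : DRel s N) (a k : ℕ) (hk : a + 4 ≤ k) (hN : k ≤ N) :
    s k * descProd s a = descProd s a * s k := by
  induction a with
  | zero => simp [descProd]
  | succ a ih =>
    rw [descProd, ← mul_assoc, h.comm (a + 3) k (by omega) (by omega) hN, mul_assoc,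
      ih (by omega), mul_assoc]

lemma simple_tildeProd (h : DRel s N) (j k : ℕ) (hk : j + 3 ≤ k) (hN : k ≤ N) :
    s k * tildeProd s j = tildeProd s j * s k := by
  induction j with
  | zero => simp [tildeProd]
  | succ j ih =>
    rw [tildeProd, ← mul_assoc, ← mul_assoc, ih (by omega), mul_assoc (tildeProd s j),
      h.simple_descProd j k (by omega) hN, mul_assoc, mul_assoc,
      h.simple_forkGen (j + 1) k (by omega) hN]
    simp only [mul_assoc]

/-- Conjugation by a descending product shifts the chain generators down by one. -/
lemma descProd_simple (h : DRel s N) (a i : ℕ) (hi : 3 ≤ i) (hia : i + 1 ≤ a + 2)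
    (hN : a + 2 ≤ N) : descProd s a * s (i + 1) = s i * descProd s a := by
  induction a with
  | zero => omega
  | succ a ih =>
    rcases Nat.lt_or_ge i (a + 2) with hlt | hge
    · rw [descProd, mul_assoc, ih (by omega) (by omega), ← mul_assoc, ← mul_assoc,
        h.comm i (a + 3) hi (by omega) (by omega)]
    · obtain ⟨b, rfl⟩ : ∃ b, a = b + 1 := ⟨a - 1, by omega⟩
      obtain rfl : i = b + 3 := by omega
      simp only [descProd]
      have hc := h.simple_descProd b (b + 4) (by omega) (by omega)
      have hb := h.braid (b + 3) (by omega) (by omega)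
      calc s (b + 1 + 3) * (s (b + 3) * descProd s b) * s (b + 3 + 1)
          = s (b + 3 + 1) * s (b + 3) * (descProd s b * s (b + 4)) := by
            simp only [mul_assoc]
        _ = s (b + 3 + 1) * s (b + 3) * s (b + 3 + 1) * descProd s b := by
            rw [← hc]; simp only [mul_assoc]
        _ = s (b + 3) * (s (b + 1 + 3) * (s (b + 3) * descProd s b)) := by
            rw [← hb]; simp only [mul_assoc]

/-- A descending product followed by a fork generator conjugates `s_3` to that generator. -/
lemma descProd_forkGen (h : DRel s N) (a j : ℕ) (hN : a + 3 ≤ N) :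
    descProd s (a + 1) * forkGen s j * s 3 =
      forkGen s j * descProd s (a + 1) * forkGen s j := by
  induction a with
  | zero => simpa [descProd] using h.braid_forkGen j hN
  | succ a ih =>
    rw [descProd, mul_assoc, mul_assoc, ← mul_assoc (descProd s (a + 1)), ih (by omega),
      ← mul_assoc, ← mul_assoc, h.simple_forkGen j _ (by omega) (by omega)]
    simp only [mul_assoc]

/-- Two consecutive descending products: the largest generator moves to the front, leaving
`s_{a+3} (s_{a+2} ⋯ s_3) (s_{a+3} ⋯ s_4)`, where the factor `s_3` cancels the last `s_3`. -/
lemma descProd_mul_descProd (h : DRel s N) (a : ℕ) (hN : a + 3 ≤ N) :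
    descProd s a * descProd s (a + 1) =
      s (a + 3) * descProd s a * descProd s (a + 1) * s 3 := by
  induction a with
  | zero => simp [descProd, h.sq]
  | succ a ih =>
    have hc := h.simple_descProd a (a + 4) (by omega) (by omega)
    have hb := h.braid (a + 3) (by omega) (by omega)
    calc descProd s (a + 1) * descProd s (a + 1 + 1)
        = s (a + 3) * (descProd s a * s (a + 4)) * descProd s (a + 1) := by
          rw [descProd, descProd, descProd]; simp only [mul_assoc]
      _ = s (a + 3) * s (a + 4) * (descProd s a * descProd s (a + 1)) := by
          rw [← hc]; simp only [mul_assoc]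
      _ = (s (a + 3) * s (a + 3 + 1) * s (a + 3)) * descProd s a * descProd s (a + 1) * s 3 := by
          rw [ih (by omega)]; simp only [mul_assoc]
      _ = s (a + 4) * s (a + 3) * (s (a + 4) * descProd s a) * descProd s (a + 1) * s 3 := by
          rw [hb]; simp only [mul_assoc]
      _ = s (a + 1 + 3) * descProd s (a + 1) * descProd s (a + 1 + 1) * s 3 := by
          rw [hc]; simp only [descProd, mul_assoc]

/-- Right multiplication of `j + 2` blocks of `w̃` by the fork generator that does not end the last
block equals left multiplication by `s_{j+3}`, because that generator commutes with the last block's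
fork generator and is braided with the `s_3` before it. -/
lemma tildeProd_forkGen (h : DRel s N) (j : ℕ) (hN : j + 3 ≤ N) :
    tildeProd s (j + 2) * forkGen s (j + 1) = s (j + 3) * tildeProd s (j + 2) := by
  have hV := h.simple_tildeProd j (j + 3) le_rfl hN
  have hD := h.descProd_forkGen j (j + 1) hN
  have hDD := h.descProd_mul_descProd j hN
  have hc := h.forkGen_sq (j + 1)
  have h3 := h.braid_forkGen (j + 1) (by omega)
  have hcc := h.forkGen_comm (j + 1)
  simp only [tildeProd, show j + 1 + 1 = j + 2 from rfl] at hcc ⊢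
  generalize forkGen s (j + 1) = c at *
  generalize forkGen s (j + 2) = c' at *
  generalize tildeProd s j = V at *
  generalize descProd s (j + 1) = D' at *
  generalize descProd s j = D at *
  have hB : D' * c * s 3 * c = c * D' := by rw [hD, mul_assoc, hc, mul_one]
  calc V * D * c * D' * c' * c = V * D * (c * D' * c) * c' := by
        simp only [mul_assoc, hcc]
    _ = V * (D * D') * c * s 3 * c' := by rw [← hD]; simp only [mul_assoc]
    _ = (V * s (j + 3)) * D * D' * (s 3 * c * s 3) * c' := by
        rw [hDD]; simp only [mul_assoc]
    _ = s (j + 3) * V * D * (D' * c * s 3 * c) * c' := by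
        rw [← hV, h3]; simp only [mul_assoc]
    _ = s (j + 3) * (V * D * c * D' * c') := by rw [hB]; simp only [mul_assoc]

/-- If `H` contains every generator `s_i` with `i ≠ 1`, the coset of the first `j + 1` blocks of
`w̃` is fixed by `s_3, …, s_{j+2}` and by the fork generator that does not end the last block. -/
lemma tildeProd_fix (h : DRel s N) (H : Subgroup G) (hH : ∀ i, 2 ≤ i → i ≤ N → s i ∈ H)
    (j : ℕ) (hN : j + 2 ≤ N) :
    (∀ i, 3 ≤ i → i ≤ j + 2 → tildeProd s (j + 1) * s i * (tildeProd s (j + 1))⁻¹ ∈ H) ∧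
      tildeProd s (j + 1) * forkGen s (j + 2) * (tildeProd s (j + 1))⁻¹ ∈ H := by
  induction j with
  | zero =>
    refine ⟨fun i h1 h2 => by omega, ?_⟩
    have e1 : forkGen s 1 = s 1 := rfl
    have e2 : forkGen s 2 = s 2 := rfl
    simp only [tildeProd, descProd, one_mul, zero_add, e1, e2, h.comm12, mul_inv_cancel_right]
    exact hH 2 le_rfl hN
  | succ j ih =>
    obtain ⟨ih1, ih2⟩ := ih (by omega)
    refine ⟨fun i h3 hi => ?_, ?_⟩
    · rcases Nat.eq_or_lt_of_le h3 with rfl | h4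
      · convert ih2 using 1
        rw [tildeProd, mul_inv_eq_iff_eq_mul, mul_assoc (tildeProd s (j + 1)),
          mul_assoc (tildeProd s (j + 1)),
          h.descProd_forkGen j (j + 1 + 1) (by omega)]
        group
      · obtain ⟨k, rfl⟩ : ∃ k, i = k + 1 := ⟨i - 1, by omega⟩
        convert ih1 k (by omega) (by omega) using 1
        rw [tildeProd, mul_inv_eq_iff_eq_mul, mul_assoc,
          ← h.simple_forkGen _ _ (by omega) (by omega), ← mul_assoc,
          mul_assoc (tildeProd s (j + 1)), 
          h.descProd_simple (j + 1) k (by omega) (by omega) (by omega)]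
        group
    · rw [forkGen_add_two, h.tildeProd_forkGen j (by omega), mul_inv_cancel_right]
      exact hH _ (by omega) (by omega)

/-- The first `j` blocks of `w̃` and of `w_{m+1}` give the same right coset of `H`. -/
lemma tildeProd_lastProd (h : DRel s N) (H : Subgroup G) (hH : ∀ i, 2 ≤ i → i ≤ N → s i ∈ H)
    (j : ℕ) (hN : j + 1 ≤ N) : tildeProd s j * (lastProd s j)⁻¹ ∈ H := by
  induction j with
  | zero => simp [tildeProd, lastProd]
  | succ j ih =>
    obtain ⟨h1, h2⟩ := h.tildeProd_fix H hH j (by omega)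
    have hD : ∀ a, a ≤ j →
        tildeProd s (j + 1) * descProd s a * (tildeProd s (j + 1))⁻¹ ∈ H := by
      intro a ha
      induction a with
      | zero => simp [descProd]
      | succ a iha =>
        convert H.mul_mem (h1 (a + 3) (by omega) (by omega)) (iha (by omega)) using 1
        rw [descProd]; group
    convert H.mul_mem (H.mul_mem (hD j le_rfl) (H.inv_mem h2)) (ih (by omega)) using 1
    rw [lastProd, ← h.forkGen_mul (j + 1), tildeProd]
    group

end DRel

end Words

/-! ### The action on sign patterns -/

/-- The action of the simple reflection with 0-based index `i` on sign patterns `x`, where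
`x k = true` means that the `k`-th sign is negative: index `0` exchanges the signs at `0` and `1`
and negates both, index `i ≥ 1` exchanges the signs at `i - 1` and `i`. -/
def signAct (i : ℕ) : Function.End (ℕ → Bool) := fun x k =>
  if i = 0 then (if k = 0 then !x 1 else if k = 1 then !x 0 else x k)
  else (if k = i - 1 then x i else if k = i then x (i - 1) else x k)

lemma signAct_sq (i : ℕ) : signAct i * signAct i = 1 := by
  funext x k
  change signAct i (signAct i x) k = x k
  rcases i with _ | i <;> simp only [signAct] <;> grind

lemma signAct_comm {i j : ℕ} (hij : i < j) (h : dEntry (i + 1) (j + 1) = 2) :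
    signAct i * signAct j = signAct j * signAct i := by
  have h' : (i = 0 ∧ j = 1) ∨ (i = 0 ∧ 3 ≤ j) ∨ (1 ≤ i ∧ i + 2 ≤ j) := by
    unfold dEntry at h; split_ifs at h <;> omega
  funext x k
  change signAct i (signAct j x) k = signAct j (signAct i x) k
  rcases h' with ⟨rfl, rfl⟩ | ⟨rfl, h'⟩ | ⟨h1, h2⟩ <;> simp only [signAct] <;> grind

lemma signAct_braid {i j : ℕ} (hij : i < j) (h : dEntry (i + 1) (j + 1) = 3) :
    signAct i * signAct j * signAct i = signAct j * signAct i * signAct j := by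
  have h' : (i = 0 ∧ j = 2) ∨ (1 ≤ i ∧ j = i + 1) := by
    unfold dEntry at h; split_ifs at h <;> omega
  funext x k
  change signAct i (signAct j (signAct i x)) k = signAct j (signAct i (signAct j x)) k
  rcases h' with ⟨rfl, rfl⟩ | ⟨h1, rfl⟩ <;> simp only [signAct] <;> grind

lemma dEntry_cases {a b : ℕ} (h : a ≠ b) : dEntry a b = 2 ∨ dEntry a b = 3 := by
  unfold dEntry; rw [if_neg h]; split_ifs <;> simp

lemma signAct_liftable (m : ℕ) :
    (dMatrix m).IsLiftable (fun i => signAct i.val) := by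
  intro i j
  change (signAct i.val * signAct j.val) ^ (dEntry (i.val + 1) (j.val + 1)) = 1
  generalize i.val = a
  generalize j.val = b
  have ha := signAct_sq a
  have hb := signAct_sq b
  rcases eq_or_ne a b with rfl | hab
  · rw [ha, one_pow]
  rcases dEntry_cases (show a + 1 ≠ b + 1 by omega) with h | h <;> rw [h]
  · have hc : signAct a * signAct b = signAct b * signAct a := by
      rcases lt_or_gt_of_ne hab with hl | hl
      · exact signAct_comm hl h
      · exact (signAct_comm hl (by rwa [dEntry_symm])).symm
    rw [pow_two]
    nth_rw 2 [hc]
    rw [mul_assoc, ← mul_assoc (signAct b), hb, one_mul, ha]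
  · have hc : signAct a * signAct b * signAct a = signAct b * signAct a * signAct b := by
      rcases lt_or_gt_of_ne hab with hl | hl
      · exact signAct_braid hl h
      · exact (signAct_braid hl (by rwa [dEntry_symm])).symm
    calc (signAct a * signAct b) ^ 3
        = signAct a * signAct b * signAct a * (signAct b * signAct a * signAct b) := by
          simp only [pow_succ, pow_zero, one_mul, mul_assoc]
      _ = signAct a * signAct b * (signAct a * signAct a) * signAct b * signAct a := by
          rw [← hc]; simp only [mul_assoc]
      _ = 1 := by rw [ha, mul_one, mul_assoc (signAct a), hb, mul_one, ha]

/-- The action of the Coxeter group on sign patterns. -/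
noncomputable def signHom (m : ℕ) : DGroup m →* Function.End (ℕ → Bool) :=
  (dcs m).lift ⟨fun i => signAct i.val, signAct_liftable m⟩

lemma signHom_simple (m : ℕ) (i : Fin (m + 1)) :
    signHom m ((dcs m).simple i) = signAct i.val :=
  (dcs m).lift_apply_simple (signAct_liftable m) i

/-- The sum of the 0-based positions of the minus signs among the first `m + 1` entries. -/
def height (m : ℕ) (x : ℕ → Bool) : ℕ := ∑ k ∈ Finset.range (m + 1), if x k then k else 0

/-- A simple reflection raises the height by at most one: exchanging two adjacent signs moves at
most one minus sign by one step, and the position `0` does not count. -/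
lemma height_signAct (m : ℕ) (i : ℕ) (hi : i ≤ m) (hm : 1 ≤ m) (x : ℕ → Bool) :
    height m (signAct i x) ≤ height m x + 1 := by
  -- Only the entries at `p` and `p + 1` change, where `p = i - 1` in truncated subtraction.
  obtain ⟨p, hp, hpm⟩ : ∃ p, p = i - 1 ∧ p + 1 ≤ m := ⟨i - 1, rfl, by omega⟩
  have key : ∀ y : ℕ → Bool, height m y = (∑ k ∈ ((Finset.range (m + 1)).erase p).erase (p + 1),
      if y k then k else 0) + (if y (p + 1) then p + 1 else 0) + (if y p then p else 0) := by
    intro y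
    unfold height
    rw [Finset.sum_erase_add _ _ (by simp; omega), Finset.sum_erase_add _ _ (by simp; omega)]
  have same : (∑ k ∈ ((Finset.range (m + 1)).erase p).erase (p + 1),
      if signAct i x k then k else 0) =
      ∑ k ∈ ((Finset.range (m + 1)).erase p).erase (p + 1), if x k then k else 0 := by
    refine Finset.sum_congr rfl fun k hk => ?_
    simp only [Finset.mem_erase] at hk
    have : signAct i x k = x k := by
      unfold signAct
      grind
    rw [this]
  rw [key, key, same]
  rcases Nat.eq_zero_or_pos i with rfl | hpos
  · obtain rfl : p = 0 := hp
    simp only [signAct]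
    rcases x 0 <;> rcases x 1 <;> simp <;> omega
  · obtain rfl : i = p + 1 := by omega
    have e0 : signAct (p + 1) x p = x (p + 1) := by simp [signAct]
    have e1 : signAct (p + 1) x (p + 1) = x p := by simp [signAct]
    rw [e0, e1]
    split_ifs <;> omega

lemma height_le_length (m : ℕ) (hm : 1 ≤ m) (v : DGroup m) :
    height m (signHom m v fun _ => false) ≤ (dcs m).length v := by
  obtain ⟨ω, hω, rfl⟩ := (dcs m).exists_isReduced v
  rw [hω.eq]
  clear hω
  induction ω with
  | nil =>
    rw [(dcs m).wordProd_nil, map_one]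
    change height m (fun _ => false) ≤ _
    simp [height]
  | cons i ω ih =>
    rw [(dcs m).wordProd_cons, map_mul, signHom_simple, List.length_cons]
    exact (height_signAct m i.val (by omega) hm _).trans (by simpa using ih)

/-- The all-plus pattern is fixed by the parabolic subgroup `W_{P_1}`. -/
lemma signHom_WP (m : ℕ) {h : DGroup m} (hh : h ∈ WP m 1) :
    signHom m h (fun _ => false) = fun _ => false := by
  induction hh using Subgroup.closure_induction with
  | mem x hx =>
    obtain ⟨i, hi, rfl⟩ := hx
    have hi' : i.val ≠ 0 := fun e => hi (Fin.ext (by simpa [toIdx] using e))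
    rw [signHom_simple]
    funext k
    simp [signAct, hi']
  | one => rw [map_one]; rfl
  | mul x y _ _ hx hy =>
    rw [map_mul]
    exact (congrArg _ hy).trans hx
  | inv x _ hx =>
    have : signHom m x⁻¹ (signHom m x fun _ => false) = fun _ => false := by
      change (signHom m x⁻¹ * signHom m x) _ = _
      rw [← map_mul, inv_mul_cancel, map_one]; rfl
    rwa [hx] at this

/-! ### The generators of the Coxeter group -/

/-- The generator `s_k` of the Coxeter group in the 1-based numbering. -/
def gen (m k : ℕ) : DGroup m := (dcs m).simple (toIdx m k)

lemma toIdx_val (m k : ℕ) (hk : k ≤ m + 1) : (toIdx m k).val = k - 1 :=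
  Nat.mod_eq_of_lt (by omega)

lemma gen_pow (m a b : ℕ) (ha : 1 ≤ a) (ham : a ≤ m + 1) (hb : 1 ≤ b) (hbm : b ≤ m + 1) :
    (gen m a * gen m b) ^ dEntry a b = 1 := by
  have := (dcs m).simple_mul_simple_pow (toIdx m a) (toIdx m b)
  change _ ^ (dEntry ((toIdx m a).val + 1) ((toIdx m b).val + 1)) = 1 at this
  rwa [toIdx_val m a ham, toIdx_val m b hbm, Nat.sub_add_cancel ha, Nat.sub_add_cancel hb] at this

lemma gen_sq (m a : ℕ) : gen m a * gen m a = 1 := (dcs m).simple_mul_simple_self _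

lemma gen_inv (m a : ℕ) : (gen m a)⁻¹ = gen m a := (dcs m).inv_simple _

lemma gen_comm (m a b : ℕ) (ha : 1 ≤ a) (ham : a ≤ m + 1) (hb : 1 ≤ b) (hbm : b ≤ m + 1)
    (h : dEntry a b = 2) : gen m a * gen m b = gen m b * gen m a := by
  have := gen_pow m a b ha ham hb hbm
  rw [h, pow_two] at this
  rw [eq_inv_of_mul_eq_one_left this, mul_inv_rev, gen_inv, gen_inv]

lemma gen_braid (m a b : ℕ) (ha : 1 ≤ a) (ham : a ≤ m + 1) (hb : 1 ≤ b) (hbm : b ≤ m + 1)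
    (h : dEntry a b = 3) : gen m a * gen m b * gen m a = gen m b * gen m a * gen m b := by
  have := gen_pow m a b ha ham hb hbm
  rw [h] at this
  have e : (gen m a * gen m b * gen m a) * (gen m b * gen m a * gen m b) = 1 := by
    rw [← this]; simp only [pow_succ, pow_zero, one_mul, mul_assoc]
  rw [eq_inv_of_mul_eq_one_left e]
  simp only [mul_inv_rev, gen_inv, mul_assoc]

lemma gen_dRel (m : ℕ) (hm : 3 ≤ m) : DRel (gen m) (m + 1) where
  sq := gen_sq m
  comm12 := gen_comm m _ _ (by omega) (by omega) (by omega) (by omega) rfl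
  comm1 k h4 hN := gen_comm m _ _ (by omega) (by omega) (by omega) (by omega)
    (by unfold dEntry; split_ifs <;> omega)
  comm2 k h4 hN := gen_comm m _ _ (by omega) (by omega) (by omega) (by omega)
    (by unfold dEntry; split_ifs <;> omega)
  comm i k h3 hik hN := gen_comm m _ _ (by omega) (by omega) (by omega) (by omega)
    (by unfold dEntry; split_ifs <;> omega)
  braid1 hN := gen_braid m _ _ (by omega) (by omega) (by omega) (by omega) rfl
  braid2 hN := gen_braid m _ _ (by omega) (by omega) (by omega) (by omega) rfl
  braid i h3 hN := gen_braid m _ _ (by omega) (by omega) (by omega) (by omega)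
    (by unfold dEntry; split_ifs <;> omega)

lemma gen_mem_WP (m i : ℕ) (h2 : 2 ≤ i) (hi : i ≤ m + 1) : gen m i ∈ WP m 1 := by
  refine Subgroup.subset_closure ⟨toIdx m i, fun e => ?_, rfl⟩
  have := congrArg Fin.val e
  rw [toIdx_val m i hi, toIdx_val m 1 (by omega)] at this
  omega

/-! ### The words as products of generators -/

lemma wp_append (m : ℕ) (u v : List ℕ) : wp m (u ++ v) = wp m u * wp m v := by
  simp [wp, CoxeterSystem.wordProd_append]

lemma wp_cons (m a : ℕ) (v : List ℕ) : wp m (a :: v) = gen m a * wp m v := by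
  simp [wp, CoxeterSystem.wordProd_cons, gen]

lemma wp_nil (m : ℕ) : wp m [] = 1 := by simp [wp]

lemma wp_singleton (m a : ℕ) : wp m [a] = gen m a := by rw [wp_cons, wp_nil, mul_one]

lemma desc_succ (j : ℕ) : desc (j + 3) 3 = (j + 3) :: desc (j + 2) 3 := by
  simp only [desc, show j + 3 + 1 - 3 = j + 1 by omega, show j + 2 + 1 - 3 = j by omega,
    List.range_succ_eq_map, List.map_cons, List.map_map]
  congr 1
  refine List.map_congr_left fun t _ => ?_
  simp only [Function.comp]
  omega

lemma asc_succ (j : ℕ) : asc 3 (j + 3) = asc 3 (j + 2) ++ [j + 3] := by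
  simp only [asc, show j + 3 + 1 - 3 = j + 1 by omega, show j + 2 + 1 - 3 = j by omega,
    List.range_succ, List.map_append, List.map_cons, List.map_nil, Nat.add_comm 3 j]

lemma wp_desc (m j : ℕ) : wp m (desc (j + 2) 3) = descProd (gen m) j := by
  induction j with
  | zero => simp [desc, wp_nil, descProd]
  | succ j ih => rw [desc_succ, wp_cons, ih, descProd]

lemma wp_asc (m j : ℕ) : wp m (asc 3 (j + 2)) = (descProd (gen m) j)⁻¹ := by
  induction j with
  | zero => simp [asc, wp_nil, descProd]
  | succ j ih => rw [asc_succ, wp_append, ih, wp_singleton, descProd, mul_inv_rev, gen_inv]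

lemma wp_tilde (m j : ℕ) :
    wp m ((List.range j).flatMap
      (fun j => desc (j + 2) 3 ++ [if (j + 1) % 2 = 1 then 1 else 2])) =
      tildeProd (gen m) j := by
  induction j with
  | zero => simp [wp_nil, tildeProd]
  | succ j ih =>
    rw [List.range_succ, List.flatMap_append, wp_append, ih, List.flatMap_singleton, wp_append,
      wp_desc, wp_singleton, tildeProd, forkGen, mul_assoc]
    split_ifs <;> rfl

lemma wp_last (m j : ℕ) :
    wp m ((List.range j).flatMap (fun j => desc (j + 2) 3 ++ [1, 2] ++ asc 3 (j + 2))) =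
      lastProd (gen m) j := by
  induction j with
  | zero => simp [wp_nil, lastProd]
  | succ j ih =>
    rw [List.range_succ, List.flatMap_append, wp_append, ih, List.flatMap_singleton, wp_append,
      wp_append, wp_desc, wp_cons, wp_singleton, wp_asc, lastProd]

/-- The `k`-th block of `w̃` has `k` letters. -/
lemma length_tildeWord (j : ℕ) :
    ((List.range j).flatMap
      (fun j => desc (j + 2) 3 ++ [if (j + 1) % 2 = 1 then 1 else 2])).length =
      ∑ k ∈ Finset.range (j + 1), k := by
  induction j with
  | zero => simp
  | succ j ih =>
    rw [List.range_succ, List.flatMap_append, List.length_append, ih, List.flatMap_singleton,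
      Finset.sum_range_succ _ (j + 1)]
    simp [desc]

/-! ### The sign pattern of `w̃` -/

lemma signHom_gen (m k : ℕ) (hk : k ≤ m) : signHom m (gen m (k + 1)) = signAct k := by
  rw [gen, signHom_simple, toIdx_val m (k + 1) (by omega), Nat.add_sub_cancel]

/-- The inverse of a descending product moves the entry at `a + 1` to position `1`
and shifts the entries at `1, …, a` up by one. -/
lemma signHom_descProd (m a : ℕ) (ha : a + 1 ≤ m) (x : ℕ → Bool) :
    signHom m (descProd (gen m) a)⁻¹ x = fun k =>
      if k = 1 then x (a + 1) else if 2 ≤ k ∧ k ≤ a + 1 then x (k - 1) else x k := by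
  induction a generalizing x with
  | zero =>
    rw [descProd, inv_one, map_one]
    funext k
    simp only [Function.End.one_def, id]
    grind
  | succ a ih =>
    rw [descProd, mul_inv_rev, gen_inv, map_mul, signHom_gen m (a + 2) (by omega)]
    change signHom m (descProd (gen m) a)⁻¹ (signAct (a + 2) x) = _
    rw [ih (by omega)]
    funext k
    simp only [signAct]
    grind

lemma signHom_forkGen (m j : ℕ) (hm : 1 ≤ m) :
    signHom m (forkGen (gen m) j)⁻¹ = if j % 2 = 1 then signAct 0 else signAct 1 := by
  unfold forkGen
  split_ifs
  · rw [gen_inv, signHom_gen m 0 (by omega)]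
  · rw [gen_inv, signHom_gen m 1 (by omega)]

/-- The inverse of the first `j` blocks of `w̃` negates exactly the signs at `1, …, j`, and the
sign at `0` when `j` is odd. -/
lemma signHom_tildeProd (m j : ℕ) (hj : j ≤ m) :
    signHom m (tildeProd (gen m) j)⁻¹ (fun _ => false) = fun k =>
      decide ((1 ≤ k ∧ k ≤ j) ∨ (k = 0 ∧ j % 2 = 1)) := by
  induction j with
  | zero =>
    rw [tildeProd, inv_one, map_one]
    funext k
    simp only [Function.End.one_def, id]
    grind
  | succ j ih =>
    rw [tildeProd, mul_inv_rev, mul_inv_rev, map_mul, map_mul, signHom_forkGen m _ (by omega)]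
    change (if (j + 1) % 2 = 1 then signAct 0 else signAct 1)
      (signHom m (descProd (gen m) j)⁻¹ (signHom m (tildeProd (gen m) j)⁻¹ _)) = _
    rw [ih (by omega), signHom_descProd m j hj]
    funext k
    split_ifs with hp <;> simp only [signAct] <;> grind

lemma height_tildeProd (m : ℕ) (hm : 1 ≤ m) :
    height m (signHom m (tildeProd (gen m) (m - 1))⁻¹ fun _ => false) =
      ∑ k ∈ Finset.range m, k := by
  rw [signHom_tildeProd m (m - 1) (by omega), height, Finset.sum_range_succ]
  have : ∀ k ∈ Finset.range m, (if decide ((1 ≤ k ∧ k ≤ m - 1) ∨ (k = 0 ∧ (m - 1) % 2 = 1))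
      then k else 0) = k := by
    intro k hk
    rw [Finset.mem_range] at hk
    rcases Nat.eq_zero_or_pos k with rfl | h0
    · simp
    · rw [if_pos (by simp; omega)]
  rw [Finset.sum_congr rfl this, if_neg (by simp; omega), add_zero]

/-- Every element of the coset `W_{P_1} w̃` has length at least `m (m - 1) / 2`. -/
lemma length_ge (m : ℕ) (hm : 1 ≤ m) (h : DGroup m) (hh : h ∈ WP m 1) :
    ∑ k ∈ Finset.range m, k ≤ (dcs m).length (h * tildeProd (gen m) (m - 1)) := by
  rw [← height_tildeProd m hm, ← (dcs m).length_inv]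
  refine le_of_eq_of_le ?_ (height_le_length m hm _)
  rw [mul_inv_rev, map_mul]
  congr 1
  exact (congrArg (signHom m (tildeProd (gen m) (m - 1))⁻¹)
    (signHom_WP m ((WP m 1).inv_mem hh))).symm

/-- For odd `m`: `w̃_{m+1}` lies in the right coset `W_{P_1} · w_{m+1}`, its defining
word is reduced (so `ℓ(w̃_{m+1}) = m(m−1)/2`), and `w̃_{m+1}` is the minimal-length
representative of this coset. -/
theorem statement2 (m : ℕ) (hm : 3 ≤ m) (hpar : Odd m) :
    (∃ h ∈ WP m 1, wp m (wTildeWord m) = h * wp m (wLastWord m)) ∧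
    (dcs m).IsReduced ((wTildeWord m).map (toIdx m)) ∧
    (dcs m).length (wp m (wTildeWord m)) = m * (m - 1) / 2 ∧
    ∀ u : DGroup m, (∃ h ∈ WP m 1, u = h * wp m (wLastWord m)) →
      (dcs m).length (wp m (wTildeWord m)) ≤ (dcs m).length u := by
  have ht : wp m (wTildeWord m) = tildeProd (gen m) (m - 1) := wp_tilde m (m - 1)
  have hl : wp m (wLastWord m) = lastProd (gen m) (m - 1) := wp_last m (m - 1)
  have hcos := (gen_dRel m hm).tildeProd_lastProd (WP m 1) (gen_mem_WP m) (m - 1) (by omega)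
  have hlen : ((wTildeWord m).map (toIdx m)).length = ∑ k ∈ Finset.range m, k := by
    rw [List.length_map, wTildeWord, length_tildeWord, Nat.sub_add_cancel (by omega)]
  have hle : (dcs m).length (wp m (wTildeWord m)) ≤ ∑ k ∈ Finset.range m, k :=
    ((dcs m).length_wordProd_le _).trans_eq hlen
  have hge := length_ge m (by omega) 1 (WP m 1).one_mem
  rw [one_mul, ← ht] at hge
  have heq := le_antisymm hle hge
  refine ⟨⟨_, hcos, ?_⟩, heq.trans hlen.symm, ?_, ?_⟩
  · rw [ht, hl, inv_mul_cancel_right]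
  · rw [heq, Finset.sum_range_id]
  · rintro u ⟨h, hh, rfl⟩
    have := length_ge m (by omega) _
      ((WP m 1).mul_mem hh ((WP m 1).inv_mem hcos))
    rw [heq, hl]
    simpa [mul_assoc] using this

end FMK3
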